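/- Fix an integer τ ≥ 1 and set α = 1/(16 L τ). For any sampling sequence, the SAGA directions satisfy ‖g_k‖ ≤ 6 L B for every k with 0 ≤ k ≤ τ. -/

import Mathlib

/-!
As long as the iterates stay in a ball on which every component gradient has norm at most `M`, the
stored gradients are bounded by `M` as well, so the SAGA direction, being an average of stored
gradients plus a difference of two gradients, is bounded by `3 * M`. Consequently `τ` steps of size
`α` move the iterates by at most `3 * τ * α * M`. Every point of the ball of radius `B`
about the starting point `0` lies within `2 * B` of a zero of each gradient, so `M = 2 * L * B` is
admissible there, and `6 * L * τ * α ≤ 1` keeps the first `τ` iterates in that ball.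
-/

section Norms

variable {E : Type*} [SeminormedAddCommGroup E]

theorem norm_inv_card_smul_sum_le {ι : Type*} [Fintype ι] [Nonempty ι] [NormedSpace ℝ E]
    {v : ι → E} {M : ℝ} (hv : ∀ i, ‖v i‖ ≤ M) :
    ‖(Fintype.card ι : ℝ)⁻¹ • ∑ i, v i‖ ≤ M := by
  have card_pos : (0 : ℝ) < Fintype.card ι := by exact_mod_cast Fintype.card_pos
  rw [norm_smul, norm_inv, Real.norm_natCast, inv_mul_le_iff₀ card_pos]
  simpa using norm_sum_le_of_le Finset.univ fun i _ => hv i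

theorem norm_le_mul_add_of_lipschitzWith_of_eq_zero {E' : Type*} [SeminormedAddCommGroup E']
    {F : E → E'} {L : NNReal} {y z : E} {R B : ℝ} (hF : LipschitzWith L F) (hz : F z = 0)
    (hzB : ‖z‖ ≤ B) (hyR : ‖y‖ ≤ R) : ‖F y‖ ≤ L * (R + B) :=
  calc ‖F y‖ = ‖F y - F z‖ := by rw [hz, sub_zero]
    _ ≤ L * ‖y - z‖ := hF.norm_sub_le y z
    _ ≤ L * (R + B) := by gcongr; exact norm_sub_le_of_le hyR hzB

end Norms

theorem gradient_eq_zero_of_isLocalMin {E : Type*} [NormedAddCommGroup E] [InnerProductSpace ℝ E]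
    [CompleteSpace E] {f : E → ℝ} {z : E} (hz : IsLocalMin f z) : gradient f z = 0 := by
  rw [gradient, hz.fderiv_eq_zero, map_zero]

/-- A run of SAGA from the origin with step size `α` and sampled indices `idx`: iterates `x`,
directions `g` and memory `h`, where `h i k` is the value of the `i`-th component stored before
step `k`. The component gradients are replaced by arbitrary maps `F i`. -/
structure IsSagaRun {ι E : Type*} [Fintype ι] [DecidableEq ι] [SeminormedAddCommGroup E]
    [NormedSpace ℝ E] (F : ι → E → E) (α : ℝ) (idx : ℕ → ι) (x g : ℕ → E) (h : ι → ℕ → E) :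
    Prop where
  iterate_zero : x 0 = 0
  memory_zero : ∀ i, h i 0 = 0
  memory_succ : ∀ i k, h i (k + 1) = if idx k = i then F i (x k) else h i k
  direction_eq : ∀ k, g k =
    (Fintype.card ι : ℝ)⁻¹ • (∑ i, h i k) + (F (idx k) (x k) - h (idx k) k)
  iterate_succ : ∀ k, x (k + 1) = x k - α • g k

namespace IsSagaRun

variable {ι E : Type*} [Fintype ι] [DecidableEq ι] [SeminormedAddCommGroup E] [NormedSpace ℝ E]
  {F : ι → E → E} {α : ℝ} {idx : ℕ → ι} {x g : ℕ → E} {h : ι → ℕ → E} {M : ℝ} {k : ℕ}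

theorem norm_memory_le (run : IsSagaRun F α idx x g h) (hM : 0 ≤ M)
    (hF : ∀ j < k, ‖F (idx j) (x j)‖ ≤ M) (i : ι) : ‖h i k‖ ≤ M := by
  induction k with
  | zero => rwa [run.memory_zero, norm_zero]
  | succ k ih =>
    rw [run.memory_succ]
    split_ifs with sampled
    · exact sampled ▸ hF k k.lt_succ_self
    · exact ih fun j hj => hF j (hj.trans k.lt_succ_self)

theorem norm_direction_le (run : IsSagaRun F α idx x g h) (hM : 0 ≤ M)
    (hF : ∀ j ≤ k, ‖F (idx j) (x j)‖ ≤ M) : ‖g k‖ ≤ 3 * M := by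
  have : Nonempty ι := ⟨idx 0⟩
  have memory_le : ∀ i, ‖h i k‖ ≤ M := run.norm_memory_le hM fun j hj => hF j hj.le
  calc ‖g k‖ ≤ M + (M + M) := by
        rw [run.direction_eq]
        exact norm_add_le_of_le (norm_inv_card_smul_sum_le memory_le)
          (norm_sub_le_of_le (hF k le_rfl) (memory_le (idx k)))
    _ = 3 * M := by ring

theorem norm_iterate_le (run : IsSagaRun F α idx x g h) {C : ℝ} (hg : ∀ j < k, ‖g j‖ ≤ C) :
    ‖x k‖ ≤ k * (|α| * C) := by
  induction k with
  | zero => simp [run.iterate_zero]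
  | succ k ih =>
    have iterate_le : ‖x k‖ ≤ k * (|α| * C) := ih fun j hj => hg j (hj.trans k.lt_succ_self)
    have step_le : ‖α • g k‖ ≤ |α| * C := by
      rw [norm_smul, Real.norm_eq_abs]
      gcongr
      exact hg k k.lt_succ_self
    calc ‖x (k + 1)‖ ≤ k * (|α| * C) + |α| * C := by
          rw [run.iterate_succ]
          exact norm_sub_le_of_le iterate_le step_le
      _ = (k + 1 : ℕ) * (|α| * C) := by push_cast; ring

theorem norm_iterate_le_of_bounded_on_ball (run : IsSagaRun F α idx x g h) {R : ℝ} {τ : ℕ}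
    (hM : 0 ≤ M) (hF : ∀ i y, ‖y‖ ≤ R → ‖F i y‖ ≤ M) (hτ : τ * (|α| * (3 * M)) ≤ R)
    (hk : k ≤ τ) : ‖x k‖ ≤ R := by
  induction k using Nat.strong_induction_on with
  | h k ih =>
    have direction_le : ∀ j < k, ‖g j‖ ≤ 3 * M := fun j hj =>
      run.norm_direction_le hM fun l hl =>
        hF _ _ (ih l (hl.trans_lt hj) ((hl.trans hj.le).trans hk))
    calc ‖x k‖ ≤ k * (|α| * (3 * M)) := run.norm_iterate_le direction_le
      _ ≤ τ * (|α| * (3 * M)) := by gcongr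
      _ ≤ R := hτ

end IsSagaRun

theorem saga_bounded_directions_general {ι E : Type*} [Fintype ι] [DecidableEq ι]
    [SeminormedAddCommGroup E] [NormedSpace ℝ E] {F : ι → E → E} {L : NNReal} {z : ι → E} {B α : ℝ}
    {τ : ℕ} {idx : ℕ → ι} {x g : ℕ → E} {h : ι → ℕ → E} (hF : ∀ i, LipschitzWith L (F i))
    (hz : ∀ i, F i (z i) = 0) (hzB : ∀ i, ‖z i‖ ≤ B) (hα : 6 * L * τ * |α| ≤ 1)
    (run : IsSagaRun F α idx x g h) : ∀ k ≤ τ, ‖g k‖ ≤ 6 * L * B := by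
  intro k hk
  have B_nonneg : 0 ≤ B := (norm_nonneg _).trans (hzB (idx 0))
  have bound_on_ball : ∀ i y, ‖y‖ ≤ B → ‖F i y‖ ≤ L * (B + B) := fun i _ hy =>
    norm_le_mul_add_of_lipschitzWith_of_eq_zero (hF i) (hz i) (hzB i) hy
  have travel_le : τ * (|α| * (3 * (L * (B + B)))) ≤ B :=
    calc τ * (|α| * (3 * (L * (B + B)))) = 6 * L * τ * |α| * B := by ring
      _ ≤ B := mul_le_of_le_one_left B_nonneg hα
  have iterate_le : ∀ j ≤ k, ‖x j‖ ≤ B := fun j hj =>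
    run.norm_iterate_le_of_bounded_on_ball (by positivity) bound_on_ball travel_le (hj.trans hk)
  calc ‖g k‖ ≤ 3 * (L * (B + B)) :=
        run.norm_direction_le (by positivity) fun j hj => bound_on_ball _ _ (iterate_le j hj)
    _ = 6 * L * B := by ring

/- STATEMENT 11 (SAGA bounded directions during the burn-in period). -/
theorem saga_bounded_directions (d N : ℕ) (hd : 1 ≤ d) (hN : 1 ≤ N) (L : ℝ) (hL : 0 < L)
    (fi : Fin N → EuclideanSpace ℝ (Fin d) → ℝ)
    (hdiff : ∀ i, Differentiable ℝ (fi i))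
    (hsmooth : ∀ i x y, ‖gradient (fi i) x - gradient (fi i) y‖ ≤ L * ‖x - y‖)
    (f : EuclideanSpace ℝ (Fin d) → ℝ)
    (hf : ∀ z, f z = (∑ i, fi i z) / N)
    (xstar : EuclideanSpace ℝ (Fin d)) (hmin : ∀ y, f xstar ≤ f y)
    (xistar : Fin N → EuclideanSpace ℝ (Fin d))
    (hxi : ∀ i y, fi i (xistar i) ≤ fi i y)
    (B : ℝ) (hB : B = max ‖xstar‖ (⨆ i, ‖xistar i‖))
    (τ : ℕ) (hτ : 1 ≤ τ)
    (idx : ℕ → Fin N) (α : ℝ) (hα : α = 1 / (16 * L * τ))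
    (x g : ℕ → EuclideanSpace ℝ (Fin d))
    (h : Fin N → ℕ → EuclideanSpace ℝ (Fin d))
    (hx0 : x 0 = 0)
    (hh0 : ∀ i, h i 0 = 0)
    (hhrec : ∀ i k, h i (k + 1) = if idx k = i then gradient (fi i) (x k) else h i k)
    (hg : ∀ k, g k = (N : ℝ)⁻¹ • (∑ i, h i k)
      + (gradient (fi (idx k)) (x k) - h (idx k) k))
    (hxrec : ∀ k, x (k + 1) = x k - α • g k) :
    ∀ k : ℕ, k ≤ τ → ‖g k‖ ≤ 6 * L * B := by
  have run : IsSagaRun (fun i => gradient (fi i)) α idx x g h :=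
    ⟨hx0, hh0, hhrec, by simpa only [Fintype.card_fin] using hg, hxrec⟩
  have gradient_zero : ∀ i, gradient (fi i) (xistar i) = 0 := fun i =>
    gradient_eq_zero_of_isLocalMin (.of_forall (hxi i))
  have minimizer_le : ∀ i, ‖xistar i‖ ≤ B := fun i =>
    hB ▸ le_max_of_le_right (le_ciSup (Set.finite_range fun i => ‖xistar i‖).bddAbove i)
  have step_small : 6 * L * τ * |α| ≤ 1 := by
    rw [hα, abs_of_nonneg (by positivity)]
    field_simp
    norm_num
  lift L to NNReal using hL.le
  have gradient_lipschitz : ∀ i, LipschitzWith L (gradient (fi i)) := fun i =>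
    .of_dist_le_mul fun y z => by simpa only [dist_eq_norm] using hsmooth i y z
  exact saga_bounded_directions_general gradient_lipschitz gradient_zero minimizer_le step_small run
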